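/- arXiv:2305.09966 — 2 statements merged into one kernel-verified Lean document; each statement's English description precedes it below -/
import Mathlib

section
/- Let A be an AWA, B_u the NBA constructed from A via families of total preorders (the B_u construction), w ∈ Σ^ω, and let (Q₁⁰,Q₂⁰,{⪯⁰_C}_{C∈S},S⁰,D⁰)(Q₁¹,Q₂¹,{⪯¹_C}_{C∈S},S¹,D¹)⋯ be an accepting macrorun of B_u over w. Then for every i ∈ ℕ: q ∈ Q₁ⁱ implies w[i⋯] ∈ L(A^q), and q ∈ Q₂ⁱ implies w[i⋯] ∈ L(Â^q); consequently Q₁ⁱ = Q_{w[i⋯]} for all i, i.e., the Q₁-components of every accepting macrorun of B_u over w form the unique sequence R_w. -/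
/-!
The `Q₁`-components of an accepting macrorun carry an accepting run DAG of `M` from each of their
states, and the `Q₂`-components carry an accepting run DAG of the dual automaton. Both claims are
the case `N = M` resp. `N = M.dual` of `ABA.accepts_of_breakpoint`, which only uses the breakpoint
part `(S, D)` of the macrostates. The run DAG takes the states of `Q₁` as its vertices. From a
vertex in the breakpoint set `D` of a rejecting component `S`, the edges go to the next breakpoint
set or leave `S`. By finiteness, every branch eventually stays in a single SCC `C`
(`ABA.eventually_in_scc`). If `C` is rejecting, then, since `D` is infinitely often empty and
`next` cycles through all SCCs, at some later position `D` is reset to `Q₁ ∩ C`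
(`exists_reset`). From there on the branch never leaves `D`, so `D` is never empty
again, a contradiction.

Finally, no word is accepted by both `M^q` and its dual (`ABA.not_accepts_both`): since `Y ⊨ θ` and
`Z ⊨ dual θ` force a common state of `Y`, `Z` and `vars θ`, two such run DAGs share a branch of
the underlying graph. Weakness makes the SCC in which it ends either accepting or rejecting, and so
the branch is not accepting for one of the two. Hence a state outside `Q₁` lies in `Q₂` and is
not in `Q_{w[i⋯]}`.
-/

universe u v

/-- Positive Boolean formulas over `Q` (with constants tt and ff, connectives ∧ and ∨). -/
inductive PosBool (Q : Type u) : Type u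
  | tt : PosBool Q
  | ff : PosBool Q
  | var : Q → PosBool Q
  | band : PosBool Q → PosBool Q → PosBool Q
  | bor : PosBool Q → PosBool Q → PosBool Q

namespace PosBool

variable {Q : Type u}

/-- A set `Y` satisfies a positive Boolean formula. -/
def Sat (Y : Set Q) : PosBool Q → Prop
  | .tt => True
  | .ff => False
  | .var q => q ∈ Y
  | .band θ₁ θ₂ => Sat Y θ₁ ∧ Sat Y θ₂
  | .bor θ₁ θ₂ => Sat Y θ₁ ∨ Sat Y θ₂

/-- The states occurring in a formula. -/
def vars : PosBool Q → Set Q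
  | .tt => ∅
  | .ff => ∅
  | .var q => {q}
  | .band θ₁ θ₂ => vars θ₁ ∪ vars θ₂
  | .bor θ₁ θ₂ => vars θ₁ ∪ vars θ₂

/-- The dual formula: exchange tt with ff and ∧ with ∨. -/
def dual : PosBool Q → PosBool Q
  | .tt => .ff
  | .ff => .tt
  | .var q => .var q
  | .band θ₁ θ₂ => .bor (dual θ₁) (dual θ₂)
  | .bor θ₁ θ₂ => .band (dual θ₁) (dual θ₂)

end PosBool

/-- An alternating Büchi automaton with alphabet `α` and state space `Q`. -/
structure ABA (α : Type v) (Q : Type u) where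
  init : Q
  delta : Q → α → PosBool Q
  acc : Set Q

namespace ABA

variable {α : Type v} {Q : Type u}

/-- The automaton `A^q`, i.e. `A` with initial state `q`. -/
def setInit (M : ABA α Q) (q : Q) : ABA α Q := { M with init := q }

/-- Completeness: every transition formula is satisfiable. -/
def Complete (M : ABA α Q) : Prop := ∀ q a, PosBool.Sat (Set.univ : Set Q) (M.delta q a)

/-- Edge of the underlying graph. -/
def edge (M : ABA α Q) (q q' : Q) : Prop := ∃ a, q' ∈ PosBool.vars (M.delta q a)

/-- Reachability in the underlying graph. -/
def reach (M : ABA α Q) : Q → Q → Prop := Relation.ReflTransGen M.edge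

/-- The strongly connected component of a state. -/
def sccOf (M : ABA α Q) (q : Q) : Set Q := {q' | M.reach q q' ∧ M.reach q' q}

/-- `C` is an SCC of the underlying graph. -/
def IsSCC (M : ABA α Q) (C : Set Q) : Prop := ∃ q, C = M.sccOf q

/-- A weak alternating automaton: every SCC is accepting or rejecting. -/
def IsWeak (M : ABA α Q) : Prop := ∀ q : Q, M.sccOf q ⊆ M.acc ∨ M.sccOf q ∩ M.acc = ∅

/-- The dual automaton. -/
def dual (M : ABA α Q) : ABA α Q where
  init := M.init
  delta := fun q a => (M.delta q a).dual
  acc := M.accᶜ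

/-- A run DAG of `M` over the ω-word `w`. -/
structure RunDAG (M : ABA α Q) (w : ℕ → α) where
  V : ℕ → Set Q
  E : ℕ → Q → Q → Prop
  init_mem : M.init ∈ V 0
  edge_src : ∀ ℓ q q', E ℓ q q' → q ∈ V ℓ
  edge_tgt : ∀ ℓ q q', E ℓ q q' → q' ∈ V (ℓ + 1)
  sat : ∀ ℓ q, q ∈ V ℓ → PosBool.Sat {q' | E ℓ q q'} (M.delta q (w ℓ))

/-- An ω-branch of a run DAG. -/
def RunDAG.IsBranch {M : ABA α Q} {w : ℕ → α} (G : M.RunDAG w) (b : ℕ → Q) : Prop :=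
  b 0 = M.init ∧ ∀ ℓ, G.E ℓ (b ℓ) (b (ℓ + 1))

/-- A run DAG is accepting if every ω-branch visits accepting states infinitely often. -/
def RunDAG.Accepting {M : ABA α Q} {w : ℕ → α} (G : M.RunDAG w) : Prop :=
  ∀ b, G.IsBranch b → ∀ n, ∃ m, n ≤ m ∧ b m ∈ M.acc

/-- `M` accepts `w` if there is an accepting run DAG of `M` over `w`. -/
def Accepts (M : ABA α Q) (w : ℕ → α) : Prop := ∃ G : M.RunDAG w, G.Accepting

/-- The language of `M`. -/
def lang (M : ABA α Q) : Set (ℕ → α) := {w | M.Accepts w}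

/-- `R`: the union of the rejecting SCCs. -/
def RejPart (M : ABA α Q) : Set Q := {q | M.sccOf q ∩ M.acc = ∅}

/-- `Acc`: the union of the accepting SCCs. -/
def AccPart (M : ABA α Q) : Set Q := {q | M.sccOf q ⊆ M.acc}

end ABA

/-- The suffix `w[i⋯]` of an ω-word. -/
def suffix {α : Type v} (w : ℕ → α) (i : ℕ) : ℕ → α := fun n => w (i + n)

/-- `Q_w = {s ∈ Q | w ∈ L(A^s)}`. -/
def QSet {α : Type v} {Q : Type u} (M : ABA α Q) (w : ℕ → α) : Set Q :=
  {s | w ∈ (M.setInit s).lang}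

/-- The unique sequence `R_w`, i.e. `i ↦ Q_{w[i⋯]}`. -/
def QSeq {α : Type v} {Q : Type u} (M : ABA α Q) (w : ℕ → α) (i : ℕ) : Set Q :=
  QSet M (suffix w i)

/-- A nondeterministic Büchi automaton. -/
structure NBA (α : Type v) (P : Type u) where
  init : Set P
  delta : P → α → Set P
  acc : Set P

namespace NBA

variable {α : Type v} {P : Type u}

/-- A macrorun of `N` over `w`. -/
def IsMacrorun (N : NBA α P) (w : ℕ → α) (ρ : ℕ → P) : Prop :=
  ρ 0 ∈ N.init ∧ ∀ i, ρ (i + 1) ∈ N.delta (ρ i) (w i)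

/-- An accepting macrorun of `N` over `w`. -/
def IsAccMacrorun (N : NBA α P) (w : ℕ → α) (ρ : ℕ → P) : Prop :=
  N.IsMacrorun w ρ ∧ ∀ n, ∃ m, n ≤ m ∧ ρ m ∈ N.acc

/-- The language of an NBA. -/
def lang (N : NBA α P) : Set (ℕ → α) := {w | ∃ ρ, N.IsAccMacrorun w ρ}

/-- `N^m`: the NBA `N` with set of initial states `{m}`. -/
def fromState (N : NBA α P) (p : P) : NBA α P := { N with init := {p} }

/-- An NBA is unambiguous if it has at most one accepting macrorun over every word. -/
def Unambiguous (N : NBA α P) : Prop :=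
  ∀ w ρ₁ ρ₂, N.IsAccMacrorun w ρ₁ → N.IsAccMacrorun w ρ₂ → ρ₁ = ρ₂

end NBA

/-- Macrostates of the Bustan–Rubin–Vardi construction: tuples `(Q₁, Q₂, Q₃, Q₄)`. -/
abbrev BRVState (Q : Type u) := Set Q × Set Q × Set Q × Set Q

/-- Consistency of a BRV tuple: `Q₂ = Q∖Q₁`, `Q₃ ⊆ Q₁∖F`, `Q₄ ⊆ Q₂∖F̂`. -/
def BRVConsistent {α : Type v} {Q : Type u} (M : ABA α Q) (m : BRVState Q) : Prop :=
  m.2.1 = m.1ᶜ ∧ m.2.2.1 ⊆ m.1 \ M.acc ∧ m.2.2.2 ⊆ m.2.1 \ M.dual.acc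

/-- The Bustan–Rubin–Vardi NBA `B` constructed from an AWA. -/
def BRV {α : Type v} {Q : Type u} (M : ABA α Q) : NBA α (BRVState Q) where
  init := {m | BRVConsistent M m ∧ M.init ∈ m.1}
  delta := fun m σ =>
    {m' | BRVConsistent M m ∧ BRVConsistent M m' ∧
      (∀ s ∈ m.1, PosBool.Sat m'.1 (M.delta s σ)) ∧
      (∀ s ∈ m.2.1, PosBool.Sat m'.2.1 (M.dual.delta s σ)) ∧
      ((m.2.2.1 = ∅ ∧ m.2.2.2 = ∅ ∧ m'.2.2.1 = m'.1 \ M.acc ∧ m'.2.2.2 = m'.2.1 \ M.dual.acc) ∨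
       ((m.2.2.1 ≠ ∅ ∨ m.2.2.2 ≠ ∅) ∧
        (∃ Y₃ ⊆ m'.1, (∀ s ∈ m.2.2.1, PosBool.Sat Y₃ (M.delta s σ)) ∧ m'.2.2.1 = Y₃ \ M.acc) ∧
        (∃ Y₄ ⊆ m'.2.1, (∀ s ∈ m.2.2.2, PosBool.Sat Y₄ (M.dual.delta s σ)) ∧
          m'.2.2.2 = Y₄ \ M.dual.acc)))}
  acc := {m | BRVConsistent M m ∧ m.2.2.1 = ∅ ∧ m.2.2.2 = ∅}

/-- The domain of the distance function at level `i`: `(Q₁ⁱ ∩ R) ∪ (Acc ∖ Q₁ⁱ)`. -/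
def DistDom {α : Type v} {Q : Type u} (M : ABA α Q) (QS : ℕ → Set Q) (i : ℕ) : Set Q :=
  (QS i ∩ M.RejPart) ∪ (M.AccPart \ QS i)

/-- Consistency of a sequence of distance functions (Rules R1 and R2). -/
def ConsistentDist {α : Type v} {Q : Type u} (M : ABA α Q) (w : ℕ → α)
    (QS : ℕ → Set Q) (d : ℕ → Q → ℕ) : Prop :=
  ∀ i : ℕ,
    (∀ p ∈ M.RejPart ∩ QS i,
      PosBool.Sat ((QS (i + 1) \ M.sccOf p) ∪
        {q | q ∈ M.sccOf p ∩ QS (i + 1) ∧ d (i + 1) q ≤ d i p - 1}) (M.delta p (w i)) ∧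
      (1 < d i p →
        ¬ PosBool.Sat ((QS (i + 1) \ M.sccOf p) ∪
          {q | q ∈ M.sccOf p ∩ QS (i + 1) ∧ d (i + 1) q ≤ d i p - 2}) (M.delta p (w i)))) ∧
    (∀ p ∈ M.AccPart \ QS i,
      PosBool.Sat ((QS (i + 1) ∪ M.sccOf p)ᶜ ∪
        {q | q ∈ M.sccOf p \ QS (i + 1) ∧ d (i + 1) q ≤ d i p - 1}) (M.dual.delta p (w i)) ∧
      (1 < d i p →
        ¬ PosBool.Sat ((QS (i + 1) ∪ M.sccOf p)ᶜ ∪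
          {q | q ∈ M.sccOf p \ QS (i + 1) ∧ d (i + 1) q ≤ d i p - 2}) (M.dual.delta p (w i))))

/-- Strict part of a preorder. -/
def StrictOf {Q : Type u} (le : Q → Q → Prop) (p q : Q) : Prop := le p q ∧ ¬ le q p

/-- `le` is a total preorder on `D` (as a relation over `D × D`). -/
def IsTotalPreorderOn {Q : Type u} (D : Set Q) (le : Q → Q → Prop) : Prop :=
  (∀ p q, le p q → p ∈ D ∧ q ∈ D) ∧ (∀ p ∈ D, le p p) ∧
  (∀ p q r, le p q → le q r → le p r) ∧ (∀ p ∈ D, ∀ q ∈ D, le p q ∨ le q p)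

/-- `D` is downwards closed w.r.t. `le` inside the domain `Dom`. -/
def DownClosed {Q : Type u} (le : Q → Q → Prop) (Dom D : Set Q) : Prop :=
  D ⊆ Dom ∧ ∀ q ∈ D, ∀ q', le q' q → q' ∈ D

/-- The set of maximal elements of a preorder on the domain `Dom`. -/
def MaxSet {Q : Type u} (le : Q → Q → Prop) (Dom : Set Q) : Set Q :=
  {q | q ∈ Dom ∧ ∀ q' ∈ Dom, ¬ StrictOf le q q'}

/-- Rule R1' for a rejecting SCC `C`, letter `σ`, sets `Q₁, Q₁'` and preorders `le, le'`. -/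
def RuleR1 {α : Type v} {Q : Type u} (M : ABA α Q) (C : Set Q) (σ : α)
    (Q1 Q1' : Set Q) (le le' : Q → Q → Prop) : Prop :=
  ∀ q ∈ C ∩ Q1, ∀ q' ∈ C ∩ Q1,
    (StrictOf le q q' ↔ ∃ r ∈ C ∩ Q1',
      PosBool.Sat ({r' | r' ∈ C ∩ Q1' ∧ StrictOf le' r' r} ∪ (Q1' \ C)) (M.delta q σ) ∧
      ¬ PosBool.Sat ({r' | r' ∈ C ∩ Q1' ∧ StrictOf le' r' r} ∪ (Q1' \ C)) (M.delta q' σ))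

/-- Rule R2' for an accepting SCC `C`, letter `σ`, sets `Q₁, Q₁'` and preorders `le, le'`. -/
def RuleR2 {α : Type v} {Q : Type u} (M : ABA α Q) (C : Set Q) (σ : α)
    (Q1 Q1' : Set Q) (le le' : Q → Q → Prop) : Prop :=
  ∀ q ∈ C \ Q1, ∀ q' ∈ C \ Q1,
    (StrictOf le q q' ↔ ∃ r ∈ C \ Q1',
      PosBool.Sat ({r' | r' ∈ C \ Q1' ∧ StrictOf le' r' r} ∪ (Q1' ∪ C)ᶜ) (M.dual.delta q σ) ∧
      ¬ PosBool.Sat ({r' | r' ∈ C \ Q1' ∧ StrictOf le' r' r} ∪ (Q1' ∪ C)ᶜ) (M.dual.delta q' σ))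

/-- Consistency of a sequence of families of total preorders (Rules R1' and R2'). -/
def ConsistentPre {α : Type v} {Q : Type u} (M : ABA α Q) (w : ℕ → α)
    (QS : ℕ → Set Q) (pre : ℕ → Set Q → Q → Q → Prop) : Prop :=
  ∀ i C, M.IsSCC C →
    (C ⊆ M.RejPart →
      IsTotalPreorderOn (C ∩ QS i) (pre i C) ∧
      RuleR1 M C (w i) (QS i) (QS (i + 1)) (pre i C) (pre (i + 1) C)) ∧
    (C ⊆ M.AccPart →
      IsTotalPreorderOn (C \ QS i) (pre i C) ∧
      RuleR2 M C (w i) (QS i) (QS (i + 1)) (pre i C) (pre (i + 1) C))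

/-- Macrostates of the `B_u` construction: `(Q₁, Q₂, {⪯_C}_{C∈S}, S, D)`. -/
abbrev BuState (Q : Type u) := Set Q × Set Q × (Set Q → Q → Q → Prop) × Set Q × Set Q

def BuState.q1 {Q : Type u} (m : BuState Q) : Set Q := m.1
def BuState.q2 {Q : Type u} (m : BuState Q) : Set Q := m.2.1
def BuState.pre {Q : Type u} (m : BuState Q) : Set Q → Q → Q → Prop := m.2.2.1
def BuState.sS {Q : Type u} (m : BuState Q) : Set Q := m.2.2.2.1
def BuState.dD {Q : Type u} (m : BuState Q) : Set Q := m.2.2.2.2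

/-- Well-formedness of a `B_u` macrostate. -/
def BuWF {α : Type v} {Q : Type u} (M : ABA α Q) (m : BuState Q) : Prop :=
  m.q2 = m.q1ᶜ ∧
  (∀ C, M.IsSCC C →
    (C ⊆ M.RejPart → IsTotalPreorderOn (m.q1 ∩ C) (m.pre C)) ∧
    (C ⊆ M.AccPart → IsTotalPreorderOn (m.q2 ∩ C) (m.pre C))) ∧
  (∀ C, ¬ M.IsSCC C → m.pre C = fun _ _ => False) ∧
  M.IsSCC m.sS ∧
  (m.sS ⊆ M.RejPart → DownClosed (m.pre m.sS) (m.q1 ∩ m.sS) m.dD) ∧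
  (m.sS ⊆ M.AccPart → DownClosed (m.pre m.sS) (m.q2 ∩ m.sS) m.dD)

/-- The NBA `B_u` constructed from an AWA `M`, a round-robin successor `next` on SCCs
and an initial SCC `C₀`. -/
def Bu {α : Type v} {Q : Type u} (M : ABA α Q) (next : Set Q → Set Q) (C0 : Set Q) :
    NBA α (BuState Q) where
  init := {m | BuWF M m ∧ M.init ∈ m.q1 ∧ m.sS = C0 ∧ m.dD = ∅}
  delta := fun m σ =>
    {m' | BuWF M m ∧ BuWF M m' ∧
      (∀ s ∈ m.q1, PosBool.Sat m'.q1 (M.delta s σ)) ∧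
      (∀ s ∈ m.q2, PosBool.Sat m'.q2 (M.dual.delta s σ)) ∧
      (∀ C, M.IsSCC C →
        (C ⊆ M.RejPart → RuleR1 M C σ m.q1 m'.q1 (m.pre C) (m'.pre C)) ∧
        (C ⊆ M.AccPart → RuleR2 M C σ m.q1 m'.q1 (m.pre C) (m'.pre C))) ∧
      (m.dD = ∅ → m'.sS = next m.sS ∧
        (m'.sS ⊆ M.RejPart → m'.dD = m'.q1 ∩ m'.sS) ∧
        (m'.sS ⊆ M.AccPart → m'.dD = m'.q2 ∩ m'.sS)) ∧
      (m.dD ≠ ∅ → m'.sS = m.sS ∧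
        (m.sS ⊆ M.RejPart →
          (∀ s ∈ m.dD, PosBool.Sat (m'.dD ∪ (m'.q1 \ m.sS)) (M.delta s σ)) ∧
          (∀ D'', DownClosed (m'.pre m.sS) (m'.q1 ∩ m.sS) D'' →
            (∀ s ∈ m.dD, PosBool.Sat (D'' ∪ (m'.q1 \ m.sS)) (M.delta s σ)) → m'.dD ⊆ D'')) ∧
        (m.sS ⊆ M.AccPart →
          (∀ s ∈ m.dD, PosBool.Sat (m'.dD ∪ (m'.q2 \ m.sS)) (M.dual.delta s σ)) ∧
          (∀ D'', DownClosed (m'.pre m.sS) (m'.q2 ∩ m.sS) D'' →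
            (∀ s ∈ m.dD, PosBool.Sat (D'' ∪ (m'.q2 \ m.sS)) (M.dual.delta s σ)) → m'.dD ⊆ D'')))}
  acc := {m | BuWF M m ∧ m.dD = ∅}

/-- Macrostates of the `U` construction: `(Q₁, Q₂, ⪯_C, C, D)`. -/
abbrev UState (Q : Type u) := Set Q × Set Q × (Q → Q → Prop) × Set Q × Set Q

def UState.q1 {Q : Type u} (m : UState Q) : Set Q := m.1
def UState.q2 {Q : Type u} (m : UState Q) : Set Q := m.2.1
def UState.pre {Q : Type u} (m : UState Q) : Q → Q → Prop := m.2.2.1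
def UState.cC {Q : Type u} (m : UState Q) : Set Q := m.2.2.2.1
def UState.dD {Q : Type u} (m : UState Q) : Set Q := m.2.2.2.2

/-- Well-formedness of a `U` macrostate. -/
def UWF {α : Type v} {Q : Type u} (M : ABA α Q) (m : UState Q) : Prop :=
  m.q2 = m.q1ᶜ ∧ M.IsSCC m.cC ∧
  (m.cC ⊆ M.RejPart →
    IsTotalPreorderOn (m.q1 ∩ m.cC) m.pre ∧
    (m.dD = m.q1 ∩ m.cC ∨ m.dD = (m.q1 ∩ m.cC) \ MaxSet m.pre (m.q1 ∩ m.cC))) ∧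
  (m.cC ⊆ M.AccPart →
    IsTotalPreorderOn (m.q2 ∩ m.cC) m.pre ∧
    (m.dD = m.q2 ∩ m.cC ∨ m.dD = (m.q2 ∩ m.cC) \ MaxSet m.pre (m.q2 ∩ m.cC)))

/-- The NBA `U` constructed from an AWA `M`, a round-robin successor `next` on SCCs
and an initial SCC `C₀`. -/
def Uaut {α : Type v} {Q : Type u} (M : ABA α Q) (next : Set Q → Set Q) (C0 : Set Q) :
    NBA α (UState Q) where
  init := {m | UWF M m ∧ M.init ∈ m.q1 ∧ m.cC = C0 ∧ m.dD = ∅}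
  delta := fun m σ =>
    {m' | UWF M m ∧ UWF M m' ∧
      (∀ s ∈ m.q1, PosBool.Sat m'.q1 (M.delta s σ)) ∧
      (∀ s ∈ m.q2, PosBool.Sat m'.q2 (M.dual.delta s σ)) ∧
      (m.dD = ∅ → m'.cC = next m.cC ∧
        (m'.cC ⊆ M.RejPart → m'.dD = m'.q1 ∩ m'.cC) ∧
        (m'.cC ⊆ M.AccPart → m'.dD = m'.q2 ∩ m'.cC)) ∧
      (m.dD ≠ ∅ → m'.cC = m.cC ∧
        (m.cC ⊆ M.RejPart →
          RuleR1 M m.cC σ m.q1 m'.q1 m.pre m'.pre ∧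
          DownClosed m'.pre (m'.q1 ∩ m.cC) m'.dD ∧
          (∀ s ∈ m.dD, PosBool.Sat (m'.dD ∪ (m'.q1 \ m.cC)) (M.delta s σ)) ∧
          (∀ D'', DownClosed m'.pre (m'.q1 ∩ m.cC) D'' →
            (∀ s ∈ m.dD, PosBool.Sat (D'' ∪ (m'.q1 \ m.cC)) (M.delta s σ)) → m'.dD ⊆ D'')) ∧
        (m.cC ⊆ M.AccPart →
          RuleR2 M m.cC σ m.q1 m'.q1 m.pre m'.pre ∧
          DownClosed m'.pre (m'.q2 ∩ m.cC) m'.dD ∧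
          (∀ s ∈ m.dD, PosBool.Sat (m'.dD ∪ (m'.q2 \ m.cC)) (M.dual.delta s σ)) ∧
          (∀ D'', DownClosed m'.pre (m'.q2 ∩ m.cC) D'' →
            (∀ s ∈ m.dD, PosBool.Sat (D'' ∪ (m'.q2 \ m.cC)) (M.dual.delta s σ)) → m'.dD ⊆ D'')))}
  acc := {m | UWF M m ∧ m.dD = ∅}

/-- `tpo n`: the number of total preorders on an `n`-element set. -/
noncomputable def tpo (n : ℕ) : ℕ :=
  Nat.card {r : Fin n → Fin n → Prop // Reflexive r ∧ Transitive r ∧ ∀ a b, r a b ∨ r b a}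


/-! ### Positive Boolean formulas -/

namespace PosBool

variable {Q : Type u}

theorem Sat.mono {Y Z : Set Q} (h : Y ⊆ Z) (θ : PosBool Q) (hY : Sat Y θ) : Sat Z θ := by
  induction θ with
  | tt => trivial
  | ff => exact hY
  | var q => exact h hY
  | band a b iha ihb => exact ⟨iha hY.1, ihb hY.2⟩
  | bor a b iha ihb => exact hY.imp iha ihb

theorem Sat.inter_vars {Y : Set Q} (θ : PosBool Q) (hY : Sat Y θ) : Sat (Y ∩ vars θ) θ := by
  induction θ with
  | tt => trivial
  | ff => exact hY
  | var q => exact ⟨hY, rfl⟩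
  | band a b iha ihb =>
    exact ⟨(iha hY.1).mono (Set.inter_subset_inter_right _ Set.subset_union_left),
      (ihb hY.2).mono (Set.inter_subset_inter_right _ Set.subset_union_right)⟩
  | bor a b iha ihb =>
    exact hY.imp
      (fun h => (iha h).mono (Set.inter_subset_inter_right _ Set.subset_union_left))
      (fun h => (ihb h).mono (Set.inter_subset_inter_right _ Set.subset_union_right))

theorem vars_dual (θ : PosBool Q) : vars θ.dual = vars θ := by
  induction θ with
  | tt => rfl
  | ff => rfl
  | var q => rfl
  | band a b iha ihb => simp only [dual, vars, iha, ihb]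
  | bor a b iha ihb => simp only [dual, vars, iha, ihb]

/-- A model of a formula and a model of its dual share a state occurring in the formula. -/
theorem Sat.exists_common {Y Z : Set Q} (θ : PosBool Q) (hY : Sat Y θ) (hZ : Sat Z θ.dual) :
    ∃ q ∈ vars θ, q ∈ Y ∧ q ∈ Z := by
  induction θ with
  | tt => exact hZ.elim
  | ff => exact hY.elim
  | var q => exact ⟨q, rfl, hY, hZ⟩
  | band a b iha ihb =>
    rcases hZ with h | h
    · obtain ⟨q, hq, h'⟩ := iha hY.1 h
      exact ⟨q, Or.inl hq, h'⟩
    · obtain ⟨q, hq, h'⟩ := ihb hY.2 h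
      exact ⟨q, Or.inr hq, h'⟩
  | bor a b iha ihb =>
    rcases hY with h | h
    · obtain ⟨q, hq, h'⟩ := iha h hZ.1
      exact ⟨q, Or.inl hq, h'⟩
    · obtain ⟨q, hq, h'⟩ := ihb h hZ.2
      exact ⟨q, Or.inr hq, h'⟩

end PosBool

/-! ### Strongly connected components -/

namespace ABA

variable {α : Type v} {Q : Type u}

theorem sccOf_eq_of_mem (M : ABA α Q) {p q : Q} (h : p ∈ M.sccOf q) : M.sccOf p = M.sccOf q := by
  ext r
  exact ⟨fun hr => ⟨h.1.trans hr.1, hr.2.trans h.2⟩, fun hr => ⟨h.2.trans hr.1, hr.2.trans h.1⟩⟩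

theorem edge_dual (M : ABA α Q) : M.dual.edge = M.edge := by
  funext p q
  simp only [edge, dual, PosBool.vars_dual]

theorem sccOf_dual (M : ABA α Q) (q : Q) : M.dual.sccOf q = M.sccOf q := by
  simp only [sccOf, reach, edge_dual]

theorem isSCC_dual (M : ABA α Q) (C : Set Q) : M.dual.IsSCC C ↔ M.IsSCC C := by
  simp only [IsSCC, sccOf_dual]

theorem IsWeak.dual {M : ABA α Q} (h : M.IsWeak) : M.dual.IsWeak := by
  intro q
  rw [sccOf_dual]
  rcases h q with h | h
  · right
    exact Set.disjoint_iff_inter_eq_empty.1 (Set.disjoint_compl_right_iff_subset.2 h)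
  · left
    exact Set.subset_compl_iff_disjoint_right.2 (Set.disjoint_iff_inter_eq_empty.2 h)

theorem IsSCC.subset_rejPart {M : ABA α Q} {C : Set Q} (hC : M.IsSCC C) (h : C ∩ M.acc = ∅) :
    C ⊆ M.RejPart := by
  obtain ⟨q, rfl⟩ := hC
  intro p hp
  change M.sccOf p ∩ M.acc = ∅
  rw [sccOf_eq_of_mem M hp, h]

theorem IsSCC.subset_accPart {M : ABA α Q} {C : Set Q} (hC : M.IsSCC C) (h : C ⊆ M.acc) :
    C ⊆ M.AccPart := by
  obtain ⟨q, rfl⟩ := hC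
  intro p hp
  change M.sccOf p ⊆ M.acc
  rwa [sccOf_eq_of_mem M hp]

/-- An infinite path in the underlying graph of a finite automaton ends up in a single SCC. -/
theorem eventually_in_scc [Finite Q] (M : ABA α Q) (b : ℕ → Q)
    (hb : ∀ n, M.edge (b n) (b (n + 1))) : ∃ q n, ∀ m, n ≤ m → b m ∈ M.sccOf q := by
  have hreach : ∀ m k, M.reach (b m) (b (m + k)) := by
    intro m k
    induction k with
    | zero => exact Relation.ReflTransGen.refl
    | succ k ih => exact ih.tail (hb (m + k))
  obtain ⟨q, hq⟩ := Finite.exists_infinite_fiber b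
  have hq' : (b ⁻¹' {q}).Infinite := Set.infinite_coe_iff.1 hq
  obtain ⟨n, hn⟩ := hq'.nonempty
  refine ⟨q, n, fun m hm => ?_⟩
  obtain ⟨k, hk, hmk⟩ := hq'.exists_gt m
  have hn : b n = q := hn
  have hk : b k = q := hk
  constructor
  · have h := hreach n (m - n)
    rwa [hn, Nat.add_sub_cancel' hm] at h
  · have h := hreach m (k - m)
    rwa [Nat.add_sub_cancel' hmk.le, hk] at h

/-! ### Disjointness of the languages of a weak automaton and its dual -/

/-- A weak automaton and its dual accept no common word from the same state. -/
theorem not_accepts_both [Finite Q] (M : ABA α Q) (hweak : M.IsWeak) (w : ℕ → α) (q : Q)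
    (h1 : w ∈ (M.setInit q).lang) (h2 : w ∈ (M.dual.setInit q).lang) : False := by
  obtain ⟨G, hG⟩ := h1
  obtain ⟨H, hH⟩ := h2
  have hstep : ∀ n p, p ∈ G.V n → p ∈ H.V n →
      ∃ p', p' ∈ PosBool.vars (M.delta p (w n)) ∧ G.E n p p' ∧ H.E n p p' :=
    fun n p hp hp' => PosBool.Sat.exists_common _ (G.sat n p hp) (H.sat n p hp')
  choose! f hfv hfG hfH using hstep
  -- The branch shared by `G` and `H`, built from the common successors `f`.
  let b : ℕ → Q := fun n => Nat.rec q (fun k p => f k p) n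
  have hbV : ∀ n, b n ∈ G.V n ∧ b n ∈ H.V n := by
    intro n
    induction n with
    | zero => exact ⟨G.init_mem, H.init_mem⟩
    | succ n ih =>
      exact ⟨G.edge_tgt _ _ _ (hfG n _ ih.1 ih.2), H.edge_tgt _ _ _ (hfH n _ ih.1 ih.2)⟩
  have hbG := hG b ⟨rfl, fun n => hfG n _ (hbV n).1 (hbV n).2⟩
  have hbH := hH b ⟨rfl, fun n => hfH n _ (hbV n).1 (hbV n).2⟩
  obtain ⟨r, n, hr⟩ := M.eventually_in_scc b fun n => ⟨w n, hfv n _ (hbV n).1 (hbV n).2⟩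
  obtain ⟨m, hm, hma⟩ := hbG n
  obtain ⟨m', hm', hma'⟩ := hbH n
  rcases hweak r with h | h
  · exact hma' (h (hr m' hm'))
  · exact (h ▸ (⟨hr m hm, hma⟩ : b m ∈ M.sccOf r ∩ M.acc) : b m ∈ (∅ : Set Q))

end ABA

/-! ### Acceptance from breakpoint sequences -/

/-- In a round-robin breakpoint sequence that is infinitely often empty, every component `C`
becomes, infinitely often, the successor component at a position with empty breakpoint set. -/
theorem exists_reset {Q : Type u} (S D : ℕ → Set Q) (next : Set Q → Set Q) (C : Set Q)
    (h0 : ∀ n, D n = ∅ → S (n + 1) = next (S n))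
    (h1 : ∀ n, D n ≠ ∅ → S (n + 1) = S n)
    (hinf : ∀ n, ∃ m, n ≤ m ∧ D m = ∅)
    (hcyc : ∀ n, ∃ k : ℕ, next^[k] (S n) = C) (n : ℕ) :
    ∃ m, n ≤ m ∧ D m = ∅ ∧ S (m + 1) = C := by
  have hstay : ∀ j, ∃ m, j ≤ m ∧ D m = ∅ ∧ S m = S j := by
    intro j
    by_contra! hcon
    have hconst : ∀ m, j ≤ m → S m = S j := by
      intro m hm
      induction m, hm using Nat.le_induction with
      | base => rfl
      | succ m hm ih => rw [h1 m fun h => hcon m hm h ih, ih]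
    obtain ⟨m, hm, hD⟩ := hinf j
    exact hcon m hm hD (hconst m hm)
  obtain ⟨m, hm, hDm⟩ := hinf n
  have hiter : ∀ k, ∃ m', n ≤ m' ∧ D m' = ∅ ∧ S (m' + 1) = next^[k] (S (m + 1)) := by
    intro k
    induction k with
    | zero => exact ⟨m, hm, hDm, rfl⟩
    | succ k ih =>
      obtain ⟨j, hj, -, hSj⟩ := ih
      obtain ⟨m', hm', hDm', hSm'⟩ := hstay (j + 1)
      exact ⟨m', by omega, hDm', by rw [h0 m' hDm', hSm', hSj, Function.iterate_succ_apply']⟩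
  obtain ⟨k, hk⟩ := hcyc (m + 1)
  obtain ⟨m', h⟩ := hiter k
  exact ⟨m', h.1, h.2.1, h.2.2.trans hk⟩

/-- A sequence of state sets `P` closed under the transitions of a weak automaton `N`, together with
a breakpoint sequence `(S, D)` for its rejecting SCCs that is infinitely often empty, yields
acceptance from every state of every `P i`. -/
theorem ABA.accepts_of_breakpoint {α : Type v} {Q : Type u} [Finite Q] (N : ABA α Q)
    (hweak : N.IsWeak) (next : Set Q → Set Q) (w : ℕ → α) (P S D : ℕ → Set Q)
    (hcyc : ∀ C C', N.IsSCC C → N.IsSCC C' → ∃ k : ℕ, next^[k] C = C')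
    (hP : ∀ n, ∀ s ∈ P n, PosBool.Sat (P (n + 1)) (N.delta s (w n)))
    (hS : ∀ n, N.IsSCC (S n))
    (hD : ∀ n, S n ∩ N.acc = ∅ → D n ⊆ P n)
    (h0 : ∀ n, D n = ∅ → S (n + 1) = next (S n) ∧
      (S (n + 1) ∩ N.acc = ∅ → D (n + 1) = P (n + 1) ∩ S (n + 1)))
    (h1 : ∀ n, D n ≠ ∅ → S (n + 1) = S n ∧
      (S n ∩ N.acc = ∅ →
        ∀ s ∈ D n, PosBool.Sat (D (n + 1) ∪ (P (n + 1) \ S n)) (N.delta s (w n))))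
    (hinf : ∀ n, ∃ m, n ≤ m ∧ D m = ∅) (i : ℕ) (q : Q) (hq : q ∈ P i) :
    suffix w i ∈ (N.setInit q).lang := by
  -- Vertices are the states of `P`. Edges follow the underlying graph, and from a breakpoint state
  -- of a rejecting component they either lead to the next breakpoint set or leave the component.
  let G : (N.setInit q).RunDAG (suffix w i) :=
    { V := fun n => P (i + n)
      E := fun n p p' => p ∈ P (i + n) ∧ p' ∈ P (i + n + 1) ∧
        p' ∈ PosBool.vars (N.delta p (w (i + n))) ∧
        (p ∈ D (i + n) → S (i + n) ∩ N.acc = ∅ → p' ∈ S (i + n) → p' ∈ D (i + n + 1))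
      init_mem := hq
      edge_src := fun n p p' h => h.1
      edge_tgt := fun n p p' h => h.2.1
      sat := by
        intro n p hp
        change PosBool.Sat _ (N.delta p (w (i + n)))
        by_cases hcase : p ∈ D (i + n) ∧ S (i + n) ∩ N.acc = ∅
        · obtain ⟨hpD, hrej⟩ := hcase
          obtain ⟨hS', hsat⟩ := h1 (i + n) (Set.nonempty_iff_ne_empty.1 ⟨p, hpD⟩)
          refine (PosBool.Sat.inter_vars _ (hsat hrej p hpD)).mono ?_
          rintro p' ⟨hp' | hp', hv⟩
          · exact ⟨hp, hD _ (by rwa [hS']) hp', hv, fun _ _ _ => hp'⟩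
          · exact ⟨hp, hp'.1, hv, fun _ _ h => absurd h hp'.2⟩
        · refine (PosBool.Sat.inter_vars _ (hP _ p hp)).mono ?_
          rintro p' ⟨hp', hv⟩
          exact ⟨hp, hp', hv, fun h h' => absurd ⟨h, h'⟩ hcase⟩ }
  refine ⟨G, fun b hb n => ?_⟩
  by_contra! hcon
  obtain ⟨r, n₁, hr⟩ := N.eventually_in_scc b fun k => ⟨w (i + k), (hb.2 k).2.2.1⟩
  have hrej : N.sccOf r ∩ N.acc = ∅ := by
    refine (hweak r).resolve_left fun h => ?_
    exact hcon (max n n₁) (le_max_left _ _) (h (hr _ (le_max_right _ _)))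
  obtain ⟨m, hm, hDm, hSm⟩ := exists_reset S D next (N.sccOf r) (fun k hk => (h0 k hk).1)
    (fun k hk => (h1 k hk).1) hinf (fun k => hcyc _ _ (hS k) ⟨r, rfl⟩) (i + n₁)
  -- Once `D` is reset to `P ∩ sccOf r`, the branch stays in `D`, and so `S` never changes.
  have htrap : ∀ k, m + 1 ≤ i + k → b k ∈ D (i + k) ∧ S (i + k) = N.sccOf r := by
    obtain ⟨k₀, rfl⟩ : ∃ k₀, m = i + k₀ := Nat.exists_eq_add_of_le (by omega)
    intro k hk
    have hk : k₀ + 1 ≤ k := by omega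
    induction k, hk using Nat.le_induction with
    | base =>
      refine ⟨?_, hSm⟩
      have h := (h0 _ hDm).2 (by rwa [hSm])
      rw [hSm] at h
      change b (k₀ + 1) ∈ D (i + k₀ + 1)
      rw [h]
      exact ⟨(hb.2 k₀).2.1, hr _ (by omega)⟩
    | succ k hk ih =>
      obtain ⟨hbD, hSk⟩ := ih (by omega)
      refine ⟨(hb.2 k).2.2.2 hbD (by rwa [hSk]) (by rw [hSk]; exact hr _ (by omega)), ?_⟩
      exact (h1 _ (Set.nonempty_iff_ne_empty.1 ⟨_, hbD⟩)).1.trans hSk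
  obtain ⟨m', hm', hDm'⟩ := hinf (m + 1)
  obtain ⟨k, rfl⟩ : ∃ k, m' = i + k := Nat.exists_eq_add_of_le (by omega)
  exact Set.notMem_empty _ (hDm' ▸ (htrap k hm').1)

/-- the `Q₁`-components of every accepting macrorun of `B_u` over `w`
form the unique sequence `R_w`. -/
theorem bu_first_components {α Q : Type} [Fintype α] [Fintype Q] (M : ABA α Q)
    (hweak : M.IsWeak) (hcomp : M.Complete)
    (next : Set Q → Set Q) (C0 : Set Q) (hC0 : M.IsSCC C0)
    (hnext : ∀ C, M.IsSCC C → M.IsSCC (next C))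
    (hcyc : ∀ C C', M.IsSCC C → M.IsSCC C' → ∃ k : ℕ, next^[k] C = C')
    (w : ℕ → α) (ρ : ℕ → BuState Q) (hρ : (Bu M next C0).IsAccMacrorun w ρ) :
    ∀ i : ℕ,
      (∀ q ∈ (ρ i).q1, suffix w i ∈ (M.setInit q).lang) ∧
      (∀ q ∈ (ρ i).q2, suffix w i ∈ (M.dual.setInit q).lang) ∧
      (ρ i).q1 = QSeq M w i := by
  obtain ⟨⟨-, hstep⟩, hacc⟩ := hρ
  have hinf : ∀ n, ∃ m, n ≤ m ∧ (ρ m).dD = ∅ := fun n =>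
    let ⟨m, hm, h⟩ := hacc n
    ⟨m, hm, h.2⟩
  have hwf : ∀ n, BuWF M (ρ n) := fun n => (hstep n).1
  have hSCC : ∀ n, M.IsSCC (ρ n).sS := fun n => (hwf n).2.2.2.1
  have hrej : ∀ n, (ρ n).sS ∩ M.acc = ∅ → (ρ n).sS ⊆ M.RejPart :=
    fun n h => (hSCC n).subset_rejPart h
  -- The rejecting components of the dual automaton are the accepting ones of `M`.
  have hdrej : ∀ n, (ρ n).sS ∩ M.dual.acc = ∅ → (ρ n).sS ⊆ M.AccPart := fun n h =>
    (hSCC n).subset_accPart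
      (Set.disjoint_compl_right_iff_subset.1 (Set.disjoint_iff_inter_eq_empty.2 h))
  have hQ1 : ∀ i, ∀ q ∈ (ρ i).q1, suffix w i ∈ (M.setInit q).lang := by
    refine M.accepts_of_breakpoint hweak next w (fun n => (ρ n).q1) (fun n => (ρ n).sS)
      (fun n => (ρ n).dD) hcyc ?_ hSCC ?_ ?_ ?_ hinf
    · exact fun n => (hstep n).2.2.1
    · exact fun n h => ((hwf n).2.2.2.2.1 (hrej n h)).1.trans Set.inter_subset_left
    · intro n h
      have h' := (hstep n).2.2.2.2.2.1 h
      exact ⟨h'.1, fun hr => h'.2.1 (hrej _ hr)⟩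
    · intro n h
      have h' := (hstep n).2.2.2.2.2.2 h
      exact ⟨h'.1, fun hr => (h'.2.1 (hrej _ hr)).1⟩
  have hQ2 : ∀ i, ∀ q ∈ (ρ i).q2, suffix w i ∈ (M.dual.setInit q).lang := by
    refine M.dual.accepts_of_breakpoint hweak.dual next w (fun n => (ρ n).q2)
      (fun n => (ρ n).sS) (fun n => (ρ n).dD) ?_ ?_ ?_ ?_ ?_ ?_ hinf
    · simpa only [ABA.isSCC_dual] using hcyc
    · exact fun n => (hstep n).2.2.2.1
    · exact fun n => (M.isSCC_dual _).2 (hSCC n)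
    · exact fun n h => ((hwf n).2.2.2.2.2 (hdrej n h)).1.trans Set.inter_subset_left
    · intro n h
      have h' := (hstep n).2.2.2.2.2.1 h
      exact ⟨h'.1, fun hr => h'.2.2 (hdrej _ hr)⟩
    · intro n h
      have h' := (hstep n).2.2.2.2.2.2 h
      exact ⟨h'.1, fun hr => (h'.2.2 (hdrej _ hr)).1⟩
  refine fun i => ⟨hQ1 i, hQ2 i, Set.Subset.antisymm (hQ1 i) fun q hq => ?_⟩
  by_contra hn
  have hq2 : q ∈ (ρ i).q2 := by
    rw [(hwf i).1]
    exact hn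
  exact M.not_accepts_both hweak _ q hq (hQ2 i q hq2)
end

section
/- Let A be an AWA, U the NBA constructed from A that tracks a single total preorder for one SCC at a time (the U construction), w ∈ Σ^ω, and ρ = (Q₁⁰,Q₂⁰,⪯₀,C⁰,D⁰)(Q₁¹,Q₂¹,⪯₁,C¹,D¹)⋯ an accepting macrorun of U over w; let d₀d₁⋯ be the unique consistent sequence of distance functions for R_w (and note that Q₁^j = Q_{w[j⋯]} for all j). Let i' < i be two consecutive positions with D^{i'} = Dⁱ = ∅, and suppose Cⁱ ⊆ R. Then for every j with i' < j ≤ i: (1) for all q ∈ D^j and all q' ∈ Cⁱ∩Q₁^j: d_j(q) ≤ d_j(q') iff q ⪯_j q', and d_j(q) ≤ i−j; (2) for all q ∈ Cⁱ∩Q₁^j and all q' ∈ (Cⁱ∩Q₁^j)∖D^j: q ⪯_j q' and d_j(q') > i−j; (3) sup{d_j(q) | q ∈ D^j} = i−j (with sup ∅ = 0). The analogous statements with Q₂ in place of Q₁ and δ̂ in place of δ hold when Cⁱ ⊆ Acc. -/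
/-!
The claim is proved by downward induction on the position `j`, from the breakpoint `i` towards `i'`,
simultaneously for both polarities: only the set `X j` of tracked states (`C ∩ Q₁` or `C ∩ Q₂`) and
the formulas (`δ` or `δ̂`) differ, so the induction is carried out for an abstract layer
(`DistInv`, `distInv_breakpoint`, `distInv_step`).

At a breakpoint `D = ∅`, so either no state is tracked or all tracked states are maximal, hence
equivalent, and the distances are positive by definition.

For the step, let the invariant hold one position later with bound `k`, so that
`D' = {d' ≤ k}` there and `⪯'` agrees with `d'` on `D'`.
* States of `D` are satisfied using `D'`, so their distance is at most `k + 1`.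
* A state `q'` outside `D` is strictly above all of `D`. The preorder rule provides for each
  `q ∈ D` a cut `{r' ≺' r}` satisfying `q` but not `q'`. The largest of these cuts satisfies all of
  `D`, so it contains `D'` by minimality, and therefore `D'` does not satisfy `q'`: its distance
  exceeds `k + 1`.
* Below `D'` the cuts of `⪯'` are exactly the sublevel sets of `d'`, because the supremum `k` is
  attained. Hence the preorder rule and the distance rule order the states of `D` alike.
* If all distances on `D` were at most `k`, the sublevel set `{d' ≤ k - 1}` would already satisfy
  `D`, and minimality of `D'` would contradict `sup d' = k`.
-/

universe u v

/-! ### Monotonicity of satisfaction and strongly connected components -/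

theorem PosBool.Sat.mono_s16 {Q : Type u} {Y Z : Set Q} (h : Y ⊆ Z) :
    ∀ {θ : PosBool Q}, PosBool.Sat Y θ → PosBool.Sat Z θ
  | .tt, _ => trivial
  | .ff, hf => hf
  | .var _, hq => h hq
  | .band _ _, hb => ⟨PosBool.Sat.mono_s16 h hb.1, PosBool.Sat.mono_s16 h hb.2⟩
  | .bor _ _, hb => hb.imp (PosBool.Sat.mono_s16 h) (PosBool.Sat.mono_s16 h)

theorem ABA.IsSCC.sccOf_eq {α : Type v} {Q : Type u} {M : ABA α Q} {C : Set Q} (hC : M.IsSCC C)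
    {p : Q} (hp : p ∈ C) : M.sccOf p = C := by
  obtain ⟨c, rfl⟩ := hC
  ext x
  exact ⟨fun hx => ⟨hp.1.trans hx.1, hx.2.trans hp.2⟩,
    fun hx => ⟨hp.2.trans hx.1, hx.2.trans hp.1⟩⟩

/-! ### The invariant and its propagation -/

/-- The relation between the preorder `le`, the set `D` and the distances `d` on the set `X` of
tracked states, `k` positions before the next breakpoint. -/
def DistInv {Q : Type u} (X : Set Q) (le : Q → Q → Prop) (D : Set Q) (d : Q → ℕ) (k : ℕ) : Prop :=
  (∀ q ∈ D, ∀ q' ∈ X, (d q ≤ d q' ↔ le q q') ∧ d q ≤ k) ∧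
  (∀ q ∈ X, ∀ q' ∈ X \ D, le q q' ∧ k < d q') ∧
  sSup (d '' D) = k

theorem le_of_mem_maxSet {Q : Type u} {X : Set Q} {le : Q → Q → Prop}
    (hle : IsTotalPreorderOn X le) {q q' : Q} (hq : q ∈ X) (hq' : q' ∈ MaxSet le X) : le q q' := by
  rcases hle.2.2.2 q hq q' hq'.1 with h | h
  · exact h
  · by_contra hn
    exact hq'.2 q hq ⟨h, hn⟩

theorem mem_maxSet_of_notMem {Q : Type u} {X D : Set Q} {le : Q → Q → Prop}
    (hD : D = X ∨ D = X \ MaxSet le X) {q : Q} (hq : q ∈ X) (hqD : q ∉ D) :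
    q ∈ MaxSet le X ∧ D = X \ MaxSet le X := by
  rcases hD with h | h
  · exact absurd (h ▸ hq) hqD
  · refine ⟨?_, h⟩
    by_contra hn
    exact hqD (h ▸ ⟨hq, hn⟩)

theorem distInv_breakpoint {Q : Type u} {X D : Set Q} {le : Q → Q → Prop} {d : Q → ℕ}
    (hle : IsTotalPreorderOn X le) (hD : D = X ∨ D = X \ MaxSet le X) (hD0 : D = ∅)
    (hpos : ∀ q ∈ X, 0 < d q) : DistInv X le D d 0 := by
  subst hD0
  refine ⟨fun q hq => hq.elim, fun q hq q' hq' => ⟨?_, hpos q' hq'.1⟩, by simp⟩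
  exact le_of_mem_maxSet hle hq (mem_maxSet_of_notMem hD hq'.1 hq'.2).1

/-- Backward propagation of the invariant along one transition inside a phase. Primed objects
belong to the later position, `θ q` is the formula of `q` at the letter read, and `Y` is the set of
available successors outside the tracked SCC. -/
theorem distInv_step {Q : Type u} [Finite Q] {X X' Y D D' : Set Q} {le le' : Q → Q → Prop}
    {d d' : Q → ℕ} {θ : Q → PosBool Q} {k : ℕ}
    (hle : IsTotalPreorderOn X le) (hle' : IsTotalPreorderOn X' le')
    (hD : D = X ∨ D = X \ MaxSet le X) (hne : D ≠ ∅)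
    (hpos : ∀ q ∈ X, 0 < d q) (hpos' : ∀ q ∈ X', 0 < d' q)
    (hrule : ∀ q ∈ X, ∀ q' ∈ X, (StrictOf le q q' ↔ ∃ r ∈ X',
      PosBool.Sat ({r' | r' ∈ X' ∧ StrictOf le' r' r} ∪ Y) (θ q) ∧
      ¬ PosBool.Sat ({r' | r' ∈ X' ∧ StrictOf le' r' r} ∪ Y) (θ q')))
    (hdc : DownClosed le' X' D')
    (hsat : ∀ s ∈ D, PosBool.Sat (D' ∪ Y) (θ s))
    (hmin : ∀ D'', DownClosed le' X' D'' → (∀ s ∈ D, PosBool.Sat (D'' ∪ Y) (θ s)) → D' ⊆ D'')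
    (hcons : ∀ p ∈ X,
      PosBool.Sat (Y ∪ {q | q ∈ X' ∧ d' q ≤ d p - 1}) (θ p) ∧
      (1 < d p → ¬ PosBool.Sat (Y ∪ {q | q ∈ X' ∧ d' q ≤ d p - 2}) (θ p)))
    (hinv : DistInv X' le' D' d' k) : DistInv X le D d (k + 1) := by
  obtain ⟨h1, h2, h3⟩ := hinv
  have hDX : D ⊆ X := by
    rcases hD with h | h <;> rw [h]
    exact Set.sdiff_subset
  have hDne : D.Nonempty := Set.nonempty_iff_ne_empty.mpr hne
  have hstrict : ∀ a ∈ X', ∀ b ∈ X', ¬ le' a b → StrictOf le' b a := fun a ha b hb hn =>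
    ⟨(hle'.2.2.2 a ha b hb).resolve_left hn, hn⟩
  have hD'k : ∀ q, q ∈ D' ↔ q ∈ X' ∧ d' q ≤ k := by
    intro q
    constructor
    · intro hq
      exact ⟨hdc.1 hq, (h1 q hq q (hdc.1 hq)).2⟩
    · rintro ⟨hqX, hqk⟩
      by_contra hn
      exact absurd (h2 q hqX q ⟨hqX, hn⟩).2 (by omega)
  -- Strict cuts are comparable to one another via the order of their endpoints.
  have hcut_mono : ∀ a b, le' a b →
      {r' | r' ∈ X' ∧ StrictOf le' r' a} ⊆ {r' | r' ∈ X' ∧ StrictOf le' r' b} :=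
    fun a b hab r' hr' => ⟨hr'.1, hle'.2.2.1 _ _ _ hr'.2.1 hab,
      fun hb => hr'.2.2 (hle'.2.2.1 _ _ _ hab hb)⟩
  have hcut_dc : ∀ r, DownClosed le' X' {r' | r' ∈ X' ∧ StrictOf le' r' r} :=
    fun r => ⟨fun x hx => hx.1, fun x hx y hy => ⟨(hle'.1 _ _ hy).1,
      hle'.2.2.1 _ _ _ hy hx.2.1, fun h => hx.2.2 (hle'.2.2.1 _ _ _ h hy)⟩⟩
  -- On `D'`, a strict cut is a strict sublevel set of the distance.
  have hcut : ∀ r ∈ D', {r' | r' ∈ X' ∧ StrictOf le' r' r} = {r' | r' ∈ X' ∧ d' r' < d' r} := by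
    intro r hr
    ext x
    refine and_congr_right fun hx => ?_
    have hiff := (h1 r hr x hx).1
    constructor
    · intro hs
      by_contra hn
      exact hs.2 (hiff.1 (not_lt.mp hn))
    · intro hlt
      exact hstrict r (hdc.1 hr) x hx fun h => absurd (hiff.2 h) (not_le.mpr hlt)
  -- A distance is at most `m + 1` exactly when the sublevel set at `m` satisfies the formula.
  have hdist : ∀ q ∈ X, ∀ m,
      (d q ≤ m + 1 ↔ PosBool.Sat ({x | x ∈ X' ∧ d' x ≤ m} ∪ Y) (θ q)) := by
    intro q hq m
    constructor
    · intro hm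
      refine PosBool.Sat.mono_s16 ?_ (hcons q hq).1
      rw [Set.union_comm]
      refine Set.union_subset_union_left _ fun x hx => ⟨hx.1, ?_⟩
      have := hx.2
      omega
    · intro hs
      by_contra hn
      refine (hcons q hq).2 (by omega) (PosBool.Sat.mono_s16 ?_ hs)
      rw [Set.union_comm]
      refine Set.union_subset_union_right _ fun x hx => ⟨hx.1, ?_⟩
      have := hx.2
      omega
  have hD'eq : D' = {x | x ∈ X' ∧ d' x ≤ k} := Set.ext hD'k
  have hDle : ∀ q ∈ D, d q ≤ k + 1 := fun q hq =>
    (hdist q (hDX hq) k).2 (hD'eq ▸ hsat q hq)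
  have hsupD' : 0 < k → ∃ r ∈ D', d' r = k := by
    intro hk
    have hne' : (d' '' D').Nonempty := by
      by_contra hn
      rw [Set.not_nonempty_iff_eq_empty] at hn
      rw [hn] at h3
      simp at h3
      omega
    have hmem := Nat.sSup_mem hne' (Set.toFinite _).bddAbove
    rw [h3] at hmem
    exact hmem
  have hout : ∀ q' ∈ X \ D, k + 1 < d q' := by
    rintro q' ⟨hq', hq'D⟩
    obtain ⟨hmax, hDeq⟩ := mem_maxSet_of_notMem hD hq' hq'D
    by_contra hn
    have hs : PosBool.Sat (D' ∪ Y) (θ q') := by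
      rw [hD'eq]
      exact (hdist q' hq' k).1 (not_lt.mp hn)
    have hbelow : ∀ q ∈ D, StrictOf le q q' := by
      intro q hq
      refine ⟨le_of_mem_maxSet hle (hDX hq) hmax, fun hq'q => ?_⟩
      rw [hDeq] at hq
      exact hq.2 ⟨hq.1, fun x hx hxs => hxs.2
        (hle.2.2.1 _ _ _ (le_of_mem_maxSet hle hx hmax) hq'q)⟩
    let S : Set Q := {r | r ∈ X' ∧
      ¬ PosBool.Sat ({r' | r' ∈ X' ∧ StrictOf le' r' r} ∪ Y) (θ q')}
    obtain ⟨q₀, hq₀⟩ := hDne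
    obtain ⟨r₀, hr₀, -, hr₀'⟩ := (hrule q₀ (hDX hq₀) q' hq').1 (hbelow q₀ hq₀)
    -- The largest cut that fails to satisfy `q'`.
    obtain ⟨r, hrS, hrmax⟩ := Set.exists_max_image S
      (fun r => Set.ncard {r' | r' ∈ X' ∧ StrictOf le' r' r}) (Set.toFinite _) ⟨r₀, hr₀, hr₀'⟩
    have hsub : D' ⊆ {r' | r' ∈ X' ∧ StrictOf le' r' r} := by
      refine hmin _ (hcut_dc r) fun s hsD => ?_
      obtain ⟨t, ht, hts, ht'⟩ := (hrule s (hDX hsD) q' hq').1 (hbelow s hsD)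
      refine PosBool.Sat.mono_s16 (Set.union_subset_union_left _ ?_) hts
      rcases hle'.2.2.2 t ht r hrS.1 with h | h
      · exact hcut_mono _ _ h
      · exact (Set.eq_of_subset_of_ncard_le (hcut_mono _ _ h) (hrmax t ⟨ht, ht'⟩)).ge
    exact hrS.2 (PosBool.Sat.mono_s16 (Set.union_subset_union_left _ hsub) hs)
  have hord : ∀ q ∈ D, ∀ q' ∈ X, (StrictOf le q' q ↔ d q' < d q) := by
    intro q hq q' hq'
    rw [hrule q' hq' q (hDX hq)]
    constructor
    · rintro ⟨r, hr, hrs, hrn⟩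
      -- If `r` were outside `D'`, its cut would contain `D'` and satisfy `q`.
      have hrD' : r ∈ D' := by
        by_contra hrD'
        refine hrn (PosBool.Sat.mono_s16 (Set.union_subset_union_left _ fun s hs => ?_) (hsat q hq))
        exact ⟨hdc.1 hs, hstrict r hr s (hdc.1 hs) fun h => hrD' (hdc.2 s hs r h)⟩
      have hp := hpos' r hr
      have hset : {r' | r' ∈ X' ∧ StrictOf le' r' r} = {r' | r' ∈ X' ∧ d' r' ≤ d' r - 1} := by
        rw [hcut r hrD']
        ext x
        exact and_congr_right fun _ => by omega
      rw [hset, ← hdist q' hq' (d' r - 1)] at hrs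
      rw [hset, ← hdist q (hDX hq) (d' r - 1)] at hrn
      omega
    · intro hlt
      have hqk := hDle q hq
      have hq'pos := hpos q' hq'
      obtain ⟨t, htD', htk⟩ := hsupD' (by omega)
      -- The least distance above `d q - 2` realised on `D'` cuts off the sublevel set there.
      obtain ⟨r, ⟨hrD', hrgt⟩, hrmin⟩ := Set.exists_min_image {x | x ∈ D' ∧ d q - 2 < d' x} d'
        (Set.toFinite _) ⟨t, htD', by omega⟩
      have hset : {r' | r' ∈ X' ∧ StrictOf le' r' r} = {r' | r' ∈ X' ∧ d' r' ≤ d q - 2} := by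
        rw [hcut r hrD']
        ext x
        refine and_congr_right fun hx => ⟨fun hxr => ?_, fun hxq => by omega⟩
        by_contra hn
        have hrk := ((hD'k r).1 hrD').2
        have := hrmin x ⟨(hD'k x).2 ⟨hx, by omega⟩, not_le.mp hn⟩
        omega
      refine ⟨r, hdc.1 hrD', ?_, ?_⟩
      · rw [hset, ← hdist q' hq']
        omega
      · rw [hset, ← hdist q (hDX hq)]
        omega
  refine ⟨fun q hq q' hq' => ⟨?_, hDle q hq⟩, fun q hq q' hq' => ⟨?_, hout q' hq'⟩, ?_⟩
  · have ho := hord q hq q' hq'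
    constructor
    · intro h
      by_contra hn
      exact absurd (ho.1 ⟨(hle.2.2.2 q (hDX hq) q' hq').resolve_left hn, hn⟩) (not_lt.mpr h)
    · intro h
      by_contra hn
      exact (ho.2 (not_le.mp hn)).2 h
  · exact le_of_mem_maxSet hle hq (mem_maxSet_of_notMem hD hq'.1 hq'.2).1
  · have hmem := Nat.sSup_mem (hDne.image d) (Set.toFinite _).bddAbove
    have hub : sSup (d '' D) ≤ k + 1 := by
      obtain ⟨q, hq, hqs⟩ := hmem
      rw [← hqs]
      exact hDle q hq
    refine le_antisymm hub ?_
    by_contra hn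
    have hDk : ∀ q ∈ D, d q ≤ k := fun q hq =>
      (le_csSup (Set.toFinite _).bddAbove (Set.mem_image_of_mem d hq)).trans (by omega)
    obtain ⟨q₀, hq₀⟩ := hDne
    have hk : 0 < k := (hpos q₀ (hDX hq₀)).trans_le (hDk q₀ hq₀)
    obtain ⟨t, htD', htk⟩ := hsupD' hk
    have hsub : D' ⊆ {x | x ∈ X' ∧ d' x ≤ k - 1} := by
      refine hmin _ ⟨fun x hx => hx.1, fun x hx y hy => ⟨(hle'.1 _ _ hy).1, ?_⟩⟩ fun s hs => ?_
      · have hyX := (hle'.1 _ _ hy).1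
        have hxD' : x ∈ D' := (hD'k x).2 ⟨hx.1, by have := hx.2; omega⟩
        have hyD' := hdc.2 x hxD' y hy
        have := (h1 y hyD' x hx.1).1.2 hy
        exact this.trans hx.2
      · rw [← hdist s (hDX hs)]
        have := hDk s hs
        omega
    have := (hsub htD').2
    omega

/-! ### Descent from the breakpoint -/

/-- along an accepting macrorun of `U`, between two consecutive
breakpoints the preorders agree with the unique distance functions on the `D`-sets,
the states outside `D` are maximal with large distances, and the supremum of the
distances on `D` counts down to the next breakpoint. -/
theorem u_run_distance {α Q : Type} [Fintype α] [Fintype Q] (M : ABA α Q)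
    (hweak : M.IsWeak) (hcomp : M.Complete)
    (next : Set Q → Set Q) (C0 : Set Q) (hC0 : M.IsSCC C0)
    (hnext : ∀ C, M.IsSCC C → M.IsSCC (next C))
    (hcyc : ∀ C C', M.IsSCC C → M.IsSCC C' → ∃ k : ℕ, next^[k] C = C')
    (w : ℕ → α) (ρ : ℕ → UState Q) (hρ : (Uaut M next C0).IsAccMacrorun w ρ)
    (d : ℕ → Q → ℕ)
    (hdpos : ∀ j : ℕ, ∀ q ∈ DistDom M (QSeq M w) j, 0 < d j q)
    (hd : ConsistentDist M w (QSeq M w) d)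
    (hq1 : ∀ j : ℕ, (ρ j).q1 = QSeq M w j)
    (i' i : ℕ) (hlt : i' < i) (hi' : (ρ i').dD = ∅) (hi : (ρ i).dD = ∅)
    (hconsec : ∀ j, i' < j → j < i → (ρ j).dD ≠ ∅) :
    ∀ j, i' < j → j ≤ i →
      ((ρ i).cC ⊆ M.RejPart →
        (∀ q ∈ (ρ j).dD, ∀ q' ∈ (ρ i).cC ∩ (ρ j).q1,
          (d j q ≤ d j q' ↔ (ρ j).pre q q') ∧ d j q ≤ i - j) ∧
        (∀ q ∈ (ρ i).cC ∩ (ρ j).q1, ∀ q' ∈ ((ρ i).cC ∩ (ρ j).q1) \ (ρ j).dD,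
          (ρ j).pre q q' ∧ i - j < d j q') ∧
        sSup (d j '' (ρ j).dD) = i - j) ∧
      ((ρ i).cC ⊆ M.AccPart →
        (∀ q ∈ (ρ j).dD, ∀ q' ∈ (ρ i).cC ∩ (ρ j).q2,
          (d j q ≤ d j q' ↔ (ρ j).pre q q') ∧ d j q ≤ i - j) ∧
        (∀ q ∈ (ρ i).cC ∩ (ρ j).q2, ∀ q' ∈ ((ρ i).cC ∩ (ρ j).q2) \ (ρ j).dD,
          (ρ j).pre q q' ∧ i - j < d j q') ∧
        sSup (d j '' (ρ j).dD) = i - j) := by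
  have htrans := hρ.1.2
  have hwf : ∀ j, UWF M (ρ j) := fun j => (htrans j).1
  -- The tracked SCC is constant between the two breakpoints.
  have hC : ∀ n j, j + n = i → i' < j → (ρ j).cC = (ρ i).cC := by
    intro n
    induction n with
    | zero => rintro j rfl -; rfl
    | succ n ih =>
      intro j hj hj'
      rw [← ih (j + 1) (by omega) (by omega)]
      exact (((htrans j).2.2.2.2.2 (hconsec j hj' (by omega))).1).symm
  generalize hCdef : (ρ i).cC = C at *
  have hscc : M.IsSCC C := hCdef ▸ (hwf i).2.1
  have hrej : C ⊆ M.RejPart → ∀ n j, j + n = i → i' < j →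
      DistInv (C ∩ (ρ j).q1) (ρ j).pre (ρ j).dD (d j) n := by
    intro hCR
    have hwfR : ∀ n j, j + n = i → i' < j → IsTotalPreorderOn (C ∩ (ρ j).q1) (ρ j).pre ∧
        ((ρ j).dD = C ∩ (ρ j).q1 ∨
          (ρ j).dD = (C ∩ (ρ j).q1) \ MaxSet (ρ j).pre (C ∩ (ρ j).q1)) := by
      intro n j hj hj'
      have h := (hwf j).2.2.1
      rw [hC n j hj hj', Set.inter_comm] at h
      exact h hCR
    have hposR : ∀ j, ∀ q ∈ C ∩ (ρ j).q1, 0 < d j q := fun j q hq =>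
      hdpos j q (Or.inl ⟨hq1 j ▸ hq.2, hCR hq.1⟩)
    intro n
    induction n with
    | zero =>
      intro j hj hj'
      obtain rfl : j = i := by omega
      exact distInv_breakpoint (hwfR 0 j rfl hj').1 (hwfR 0 j rfl hj').2 hi (hposR j)
    | succ n ih =>
      intro j hj hj'
      have hne := hconsec j hj' (by omega)
      have ht := ((htrans j).2.2.2.2.2 hne).2.1
      rw [hC _ j hj hj', Set.inter_comm] at ht
      obtain ⟨hrule, hdc, hsat, hmin⟩ := ht hCR
      have h' := hwfR n (j + 1) (by omega) (by omega)
      have h0 := hwfR _ j hj hj'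
      refine distInv_step (θ := fun q => M.delta q (w j)) (Y := (ρ (j + 1)).q1 \ C)
        h0.1 h'.1 h0.2 hne (hposR j) (hposR (j + 1)) hrule hdc hsat hmin ?_
        (ih (j + 1) (by omega) (by omega))
      intro p hp
      have hcp := (hd j).1 p ⟨hCR hp.1, hq1 j ▸ hp.2⟩
      rw [hscc.sccOf_eq hp.1, ← hq1 (j + 1)] at hcp
      exact hcp
  have hacc : C ⊆ M.AccPart → ∀ n j, j + n = i → i' < j →
      DistInv (C ∩ (ρ j).q2) (ρ j).pre (ρ j).dD (d j) n := by
    intro hCA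
    have hwfA : ∀ n j, j + n = i → i' < j → IsTotalPreorderOn (C ∩ (ρ j).q2) (ρ j).pre ∧
        ((ρ j).dD = C ∩ (ρ j).q2 ∨
          (ρ j).dD = (C ∩ (ρ j).q2) \ MaxSet (ρ j).pre (C ∩ (ρ j).q2)) := by
      intro n j hj hj'
      have h := (hwf j).2.2.2
      rw [hC n j hj hj', Set.inter_comm] at h
      exact h hCA
    have hq2 : ∀ j, (ρ j).q2 = (QSeq M w j)ᶜ := fun j => by rw [(hwf j).1, hq1 j]
    have hposA : ∀ j, ∀ q ∈ C ∩ (ρ j).q2, 0 < d j q := fun j q hq =>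
      hdpos j q (Or.inr ⟨hCA hq.1, (hq2 j ▸ hq.2 : q ∈ (QSeq M w j)ᶜ)⟩)
    intro n
    induction n with
    | zero =>
      intro j hj hj'
      obtain rfl : j = i := by omega
      exact distInv_breakpoint (hwfA 0 j rfl hj').1 (hwfA 0 j rfl hj').2 hi (hposA j)
    | succ n ih =>
      intro j hj hj'
      have hne := hconsec j hj' (by omega)
      have ht := ((htrans j).2.2.2.2.2 hne).2.2
      rw [hC _ j hj hj', Set.inter_comm] at ht
      obtain ⟨hrule, hdc, hsat, hmin⟩ := ht hCA
      have h' := hwfA n (j + 1) (by omega) (by omega)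
      have h0 := hwfA _ j hj hj'
      have hY : (ρ (j + 1)).q2 \ C = ((ρ (j + 1)).q1 ∪ C)ᶜ := by
        rw [(hwf (j + 1)).1, Set.compl_union, Set.sdiff_eq]
      have hX : ∀ l, C ∩ (ρ l).q2 = C \ (ρ l).q1 := fun l => by
        rw [(hwf l).1, Set.sdiff_eq]
      refine distInv_step (θ := fun q => M.dual.delta q (w j)) (Y := (ρ (j + 1)).q2 \ C)
        h0.1 h'.1 h0.2 hne (hposA j) (hposA (j + 1)) ?_ hdc hsat hmin ?_
        (ih (j + 1) (by omega) (by omega))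
      · rw [hY, hX j, hX (j + 1)]
        exact hrule
      · intro p hp
        have hcp := (hd j).2 p ⟨hCA hp.1, (hq2 j ▸ hp.2 : p ∈ (QSeq M w j)ᶜ)⟩
        rw [hscc.sccOf_eq hp.1, ← hq1 (j + 1)] at hcp
        rw [hY, hX (j + 1)]
        exact hcp
  intro j hj hji
  exact ⟨fun h => hrej h (i - j) j (by omega) hj, fun h => hacc h (i - j) j (by omega) hj⟩
end
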